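/- Let R be a commutative Noetherian ring and M a finitely generated R-module. Then ca_R(M) equals the annihilator of M in the singularity category, i.e. ca_R(M) = {r ∈ R : r · id_M = 0 in Hom_{D_sg(R)}(M,M)}, where D_sg(R) is the Verdier quotient of the bounded derived category of finitely generated modules by perfect complexes. -/

import Mathlib

open CategoryTheory

noncomputable section

universe u

variable (R : Type u) [CommRing R]

/-- The `n`-th Ext group of two `R`-modules, as an `R`-module. -/
abbrev ExtM (n : ℕ) (M N : ModuleCat.{u} R) : ModuleCat.{u} R :=
  ((Ext R (ModuleCat.{u} R) n).obj (Opposite.op M)).obj N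

/-- The `n`-th cohomological annihilator of a module `M`:
elements `r` with `r • Ext^i(M, N) = 0` for all `i ≥ n` and all finitely generated `N`. -/
def caN (n : ℕ) (M : ModuleCat.{u} R) : Ideal R where
  carrier := {r | ∀ i, n ≤ i → ∀ N : ModuleCat.{u} R, Module.Finite R N →
    ∀ x : ExtM R i M N, r • x = 0}
  zero_mem' := by intro i _ N _ x; simp
  add_mem' := by
    intro a b ha hb i hi N hN x
    rw [add_smul, ha i hi N hN x, hb i hi N hN x, add_zero]
  smul_mem' := by
    intro c r hr i hi N hN x
    simp only [smul_eq_mul, mul_smul, hr i hi N hN x, smul_zero]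

/-- The cohomological annihilator `ca_R(M) = ⋃ₙ ca_R^n(M)`. -/
def ca (M : ModuleCat.{u} R) : Set R := ⋃ n : ℕ, (caN R n M : Set R)

/-- The `n`-th co-cohomological annihilator of a module `M`. -/
def cocaN (n : ℕ) (M : ModuleCat.{u} R) : Ideal R where
  carrier := {r | ∀ i, n ≤ i → ∀ N : ModuleCat.{u} R, Module.Finite R N →
    ∀ x : ExtM R i N M, r • x = 0}
  zero_mem' := by intro i _ N _ x; simp
  add_mem' := by
    intro a b ha hb i hi N hN x
    rw [add_smul, ha i hi N hN x, hb i hi N hN x, add_zero]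
  smul_mem' := by
    intro c r hr i hi N hN x
    simp only [smul_eq_mul, mul_smul, hr i hi N hN x, smul_zero]

/-- The co-cohomological annihilator `coca_R(M) = ⋃ₙ coca_R^n(M)`. -/
def coca (M : ModuleCat.{u} R) : Set R := ⋃ n : ℕ, (cocaN R n M : Set R)

/-- `M` has projective dimension at most `n`: `Ext^i(M, -) = 0` for all `i > n`. -/
def projDimLE (n : ℕ) (M : ModuleCat.{u} R) : Prop :=
  ∀ i : ℕ, n < i → ∀ N : ModuleCat.{u} R, Subsingleton (ExtM R i M N)

/-- `M` has injective dimension at most `n`: `Ext^i(-, M) = 0` for all `i > n`. -/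
def injDimLE (n : ℕ) (M : ModuleCat.{u} R) : Prop :=
  ∀ i : ℕ, n < i → ∀ N : ModuleCat.{u} R, Subsingleton (ExtM R i N M)

/-- `K` is an `n`-th syzygy of `M` with respect to resolutions by
finitely generated projective modules. -/
def IsSyz : ℕ → ModuleCat.{u} R → ModuleCat.{u} R → Prop
  | 0, M, K => Nonempty (K ≃ₗ[R] M)
  | n + 1, M, K => ∃ (L P : ModuleCat.{u} R), IsSyz n M L ∧
      Module.Finite R P ∧ Module.Projective R P ∧
      ∃ f : P →ₗ[R] L, Function.Surjective f ∧ Nonempty (K ≃ₗ[R] LinearMap.ker f)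

/-- `X` is a direct summand of `Y`. -/
def IsSummand (X Y : ModuleCat.{u} R) : Prop :=
  ∃ (i : X →ₗ[R] Y) (p : Y →ₗ[R] X), p.comp i = LinearMap.id

/-- `X` is a direct summand of a finite direct sum of copies of `G`. -/
def IsSummandOfCopies (G X : ModuleCat.{u} R) : Prop :=
  ∃ k : ℕ, IsSummand R X (ModuleCat.of R (Fin k → G))

/-- The subcategories `thickⁿ(G)` of `mod R`. -/
def thickN (G : ModuleCat.{u} R) : ℕ → Set (ModuleCat.{u} R)
  | 0 => {X | Subsingleton X}
  | n + 1 => {X | ∃ (Y Y₁ Y₂ : ModuleCat.{u} R) (f : Y₁ →ₗ[R] Y) (g : Y →ₗ[R] Y₂),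
      Function.Injective f ∧ Function.Surjective g ∧ LinearMap.ker g = LinearMap.range f ∧
      ((Y₁ ∈ thickN G n ∧ IsSummandOfCopies R G Y₂) ∨
        (IsSummandOfCopies R G Y₁ ∧ Y₂ ∈ thickN G n)) ∧
      IsSummand R X Y}

/-- The balls `|G|ₙ` of Dao–Takahashi. -/
def ballN (G : ModuleCat.{u} R) : ℕ → Set (ModuleCat.{u} R)
  | 0 => {X | Subsingleton X}
  | n + 1 => {Y | ∃ (Y' Y₁ Y₂ : ModuleCat.{u} R)
      (f : Y₁ →ₗ[R] (ModuleCat.of R (Y × Y'))) (g : (ModuleCat.of R (Y × Y')) →ₗ[R] Y₂),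
      Function.Injective f ∧ Function.Surjective g ∧ LinearMap.ker g = LinearMap.range f ∧
      Y₁ ∈ ballN G n ∧ IsSummandOfCopies R G Y₂}

/-- A regular local ring: a Noetherian local ring whose maximal ideal can be
generated by `dim R` elements. -/
def IsRegularLocal (A : Type u) [CommRing A] [IsLocalRing A] : Prop :=
  IsNoetherianRing A ∧ ∃ s : Finset A, Ideal.span (↑s : Set A) = IsLocalRing.maximalIdeal A ∧
    (s.card : WithBot ℕ∞) = ringKrullDim A

/-- The localization of a module at a prime, as a module category object over the local ring. -/
abbrev locMod (p : PrimeSpectrum R) (M : ModuleCat.{u} R) :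
    ModuleCat.{u} (Localization.AtPrime p.asIdeal) :=
  ModuleCat.of (Localization.AtPrime p.asIdeal) (LocalizedModule p.asIdeal.primeCompl M)

/-- Depth of a module over a local ring, via vanishing of `Ext` from the residue field. -/
def depthE (A : Type u) [CommRing A] [IsLocalRing A] (N : ModuleCat.{u} A) : ℕ∞ :=
  sInf ((fun n : ℕ => (n : ℕ∞)) ''
    {n : ℕ | ¬ Subsingleton (ExtM A n (ModuleCat.of A (IsLocalRing.ResidueField A)) N)})

/-- The large restricted flat dimension of `M`. -/
def rfdE (M : ModuleCat.{u} R) : ℕ∞ :=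
  ⨆ p : PrimeSpectrum R,
    (depthE (Localization.AtPrime p.asIdeal)
        (ModuleCat.of (Localization.AtPrime p.asIdeal) (Localization.AtPrime p.asIdeal)) -
      depthE (Localization.AtPrime p.asIdeal) (locMod R p M))

/-- `r • f` factors through a finitely generated projective module. -/
def FactorsThroughProj (M : ModuleCat.{u} R) (f : M →ₗ[R] M) : Prop :=
  ∃ P : ModuleCat.{u} R, Module.Projective R P ∧ Module.Finite R P ∧
    ∃ (g : M →ₗ[R] P) (h : P →ₗ[R] M), h.comp g = f

/-- The annihilator of the stable endomorphism ring of `M`. -/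
def annStableEnd (M : ModuleCat.{u} R) : Set R :=
  {r | ∀ f : M →ₗ[R] M, FactorsThroughProj R M (r • f)}

/-- A resolving subcategory of `mod R`. -/
def IsResolving (C : Set (ModuleCat.{u} R)) : Prop :=
  (∀ P : ModuleCat.{u} R, Module.Finite R P → Module.Projective R P → P ∈ C) ∧
  (∀ X Y : ModuleCat.{u} R, Y ∈ C → IsSummand R X Y → X ∈ C) ∧
  (∀ (Y Y₁ Y₂ : ModuleCat.{u} R) (f : Y₁ →ₗ[R] Y) (g : Y →ₗ[R] Y₂),
    Function.Injective f → Function.Surjective g → LinearMap.ker g = LinearMap.range f →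
    Y₁ ∈ C → Y₂ ∈ C → Y ∈ C) ∧
  (∀ X ∈ C, ∀ K : ModuleCat.{u} R, IsSyz R 1 X K → K ∈ C)

/-- The smallest resolving subcategory containing `G`. -/
def resCl (G : ModuleCat.{u} R) : Set (ModuleCat.{u} R) :=
  ⋂₀ {C | IsResolving R C ∧ G ∈ C}

end

attribute [local instance] HasDerivedCategory.standard

noncomputable section

/-- An object of the derived category is perfect if it is isomorphic to a bounded
complex of finitely generated projective modules. -/
def IsPerfect {R : Type u} [CommRing R] (X : DerivedCategory (ModuleCat.{u} R)) : Prop :=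
  ∃ K : CochainComplex (ModuleCat.{u} R) ℤ,
    (∀ i : ℤ, Module.Finite R (K.X i) ∧ Module.Projective R (K.X i)) ∧
    (∃ a b : ℤ, ∀ i : ℤ, (i < a ∨ b < i) → Subsingleton (K.X i)) ∧
    Nonempty (DerivedCategory.Q.obj K ≅ X)

/-!
Iterating finitely generated free covers `0 → ΩM → F → M → 0` and applying the octahedral axiom
gives, for every `n`, a distinguished triangle `X → M → Ωⁿ⁺¹M[n + 1] → X[1]` with `X` perfect. Its
second map is a class in `Extⁿ⁺¹(M, Ωⁿ⁺¹M)`; if `r` kills that group then `r · id_M` composes to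
zero with this map, hence factors through `X`.

Conversely, a perfect complex `P` is represented by a bounded complex of projectives, so morphisms
`P → N[n]` in the derived category come from chain maps, and these vanish for degree reasons once
`n` is large, uniformly in `N`. If `r · id_M` factors through `P`, then `r • x` factors through such
a morphism for every class `x ∈ Extⁿ(M, N)`, so it is zero.
-/

open Abelian Limits Pretriangulated

section LinearExt

variable {R C : Type*} [CommRing R] [Category* C] [Abelian C] [Linear R C] [HasExt C]
  {X Y : C} (n : ℕ) (r : R)

lemma smul_extMk (P : ProjectiveResolution X) (c : P.complex.X n ⟶ Y)
    (hc : P.complex.d (n + 1) n ≫ c = 0) :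
    r • P.extMk c (n + 1) rfl hc = P.extMk (r • c) (n + 1) rfl (by simp [hc]) := by
  simp [Ext.smul_eq_comp_mk₀, P.extMk_comp_mk₀]

lemma mem_annihilator_ext_succ_iff (P : ProjectiveResolution X) :
    r ∈ Module.annihilator R (Abelian.Ext X Y (n + 1)) ↔
      ∀ c : P.complex.X (n + 1) ⟶ Y, P.complex.d (n + 2) (n + 1) ≫ c = 0 →
        ∃ b : P.complex.X n ⟶ Y, P.complex.d (n + 1) n ≫ b = r • c := by
  rw [Module.mem_annihilator]
  constructor
  · intro h c hc
    have := h (P.extMk c (n + 2) rfl hc)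
    rwa [smul_extMk, P.extMk_eq_zero_iff _ _ _ _ n rfl] at this
  · intro h x
    obtain ⟨c, hc, rfl⟩ := P.extMk_surjective x (n + 2) rfl
    rw [smul_extMk, P.extMk_eq_zero_iff _ _ _ _ n rfl]
    exact h c hc

lemma hom_smul_eq_map_smul_id_comp [HasDerivedCategory C] {n : ℕ} (x : Abelian.Ext X Y n) :
    (r • x).hom = (DerivedCategory.singleFunctor _ 0).map (r • 𝟙 X) ≫ x.hom := by
  simp [Ext.smul_hom, Functor.map_smul]

end LinearExt

section ExtComparison

variable {R : Type u} [CommRing R]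

lemma mem_annihilator_homology_iff (S : ShortComplex (ModuleCat.{u} R)) (r : R) :
    r ∈ Module.annihilator R S.homology ↔
      ∀ z : S.X₂, S.g z = 0 → ∃ y : S.X₁, S.f y = r • z := by
  rw [S.moduleCatHomologyIso.toLinearEquiv.annihilator_eq, Module.mem_annihilator]
  constructor
  · intro h z hz
    obtain ⟨y, hy⟩ := (Submodule.Quotient.mk_eq_zero _).1 (h (Submodule.Quotient.mk ⟨z, hz⟩))
    exact ⟨y, congrArg Subtype.val hy⟩
  · intro h x
    obtain ⟨z, rfl⟩ := Submodule.Quotient.mk_surjective _ x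
    obtain ⟨y, hy⟩ := h z.1 z.2
    exact (Submodule.Quotient.mk_eq_zero _).2 ⟨y, Subtype.ext hy⟩

lemma mem_annihilator_extM_succ_iff {M : ModuleCat.{u} R} (N : ModuleCat.{u} R) (n : ℕ) (r : R)
    (P : ProjectiveResolution M) :
    r ∈ Module.annihilator R (ExtM R (n + 1) M N) ↔
      ∀ c : P.complex.X (n + 1) ⟶ N, P.complex.d (n + 2) (n + 1) ≫ c = 0 →
        ∃ b : P.complex.X n ⟶ N, P.complex.d (n + 1) n ≫ b = r • c := by
  let K := P.complex.linearYonedaObj R N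
  let e := P.isoExt (R := R) (n + 1) N ≪≫
    ShortComplex.homologyMapIso (K.isoSc' n (n + 1) (n + 2) (by simp) (by simp))
  rw [e.toLinearEquiv.annihilator_eq]
  exact mem_annihilator_homology_iff _ r

lemma annihilator_extM_succ (M N : ModuleCat.{u} R) (n : ℕ) :
    Module.annihilator R (ExtM R (n + 1) M N) =
      Module.annihilator R (Abelian.Ext M N (n + 1)) := by
  ext r
  let P := projectiveResolution M
  rw [mem_annihilator_extM_succ_iff N n r P, mem_annihilator_ext_succ_iff n r P]

lemma mem_ca_iff {M : ModuleCat.{u} R} {r : R} :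
    r ∈ ca R M ↔ ∃ n : ℕ, ∀ i ≥ n, ∀ N : ModuleCat.{u} R, Module.Finite R N →
      r ∈ Module.annihilator R (Abelian.Ext M N (i + 1)) := by
  simp only [ca, Set.mem_iUnion, ← annihilator_extM_succ, Module.mem_annihilator]
  refine ⟨fun ⟨n, h⟩ ↦ ⟨n, fun i hi ↦ h (i + 1) (by lia)⟩,
    fun ⟨n, h⟩ ↦ ⟨n + 1, fun i hi ↦ ?_⟩⟩
  obtain ⟨j, rfl⟩ : ∃ j, i = j + 1 := ⟨i - 1, by lia⟩
  exact h j (by lia)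

end ExtComparison

lemma derivedCategoryQ_map_surjective {C : Type*} [Category* C] [Abelian C] [HasDerivedCategory C]
    (K L : CochainComplex C ℤ) [K.IsKProjective] :
    Function.Surjective
      (DerivedCategory.Q.map : (K ⟶ L) → (DerivedCategory.Q.obj K ⟶ DerivedCategory.Q.obj L)) := by
  intro f
  let e := DerivedCategory.quotientCompQhIso C
  obtain ⟨g, hg⟩ := (CochainComplex.IsKProjective.Qh_map_bijective K
    ((HomotopyCategory.quotient _ _).obj L)).surjective (e.hom.app K ≫ f ≫ e.inv.app L)
  obtain ⟨φ, rfl⟩ := (HomotopyCategory.quotient _ _).map_surjective g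
  refine ⟨φ, ?_⟩
  rw [← cancel_epi (e.hom.app K), ← cancel_mono (e.inv.app L), Category.assoc, Category.assoc,
    ← hg]
  have := e.hom.naturality φ
  dsimp only [Functor.comp_map] at this
  rw [reassoc_of% this.symm]
  simp

section Perfect

variable {R : Type u} [CommRing R]

/-- A strictly perfect complex: a bounded complex of finitely generated projective modules, so that
the perfect objects of the derived category are those isomorphic to a strictly perfect complex. -/
structure IsStrictlyPerfect (K : CochainComplex (ModuleCat.{u} R) ℤ) : Prop where
  finite (i : ℤ) : Module.Finite R (K.X i)
  projective (i : ℤ) : Module.Projective R (K.X i)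
  bounded : ∃ a b : ℤ, ∀ i : ℤ, (i < a ∨ b < i) → Subsingleton (K.X i)

lemma isPerfect_iff {X : DerivedCategory (ModuleCat.{u} R)} :
    IsPerfect X ↔ ∃ K, IsStrictlyPerfect K ∧ Nonempty (DerivedCategory.Q.obj K ≅ X) :=
  ⟨fun ⟨K, hK, hab, e⟩ ↦ ⟨K, ⟨fun i ↦ (hK i).1, fun i ↦ (hK i).2, hab⟩, e⟩,
    fun ⟨K, hK, e⟩ ↦ ⟨K, fun i ↦ ⟨hK.finite i, hK.projective i⟩, hK.bounded, e⟩⟩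

namespace IsStrictlyPerfect

variable {K L : CochainComplex (ModuleCat.{u} R) ℤ}

lemma isKProjective (hK : IsStrictlyPerfect K) : K.IsKProjective := by
  obtain ⟨a, b, hab⟩ := hK.bounded
  have : K.IsStrictlyLE b := (K.isStrictlyLE_iff b).2 fun i hi ↦
    have := hab i (.inr hi)
    ModuleCat.isZero_of_subsingleton _
  have (i : ℤ) : Projective (K.X i) := (IsProjective.iff_projective _).1 (hK.projective i)
  exact CochainComplex.isKProjective_of_projective K b

lemma mappingCone (hK : IsStrictlyPerfect K) (hL : IsStrictlyPerfect L) (φ : K ⟶ L) :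
    IsStrictlyPerfect (CochainComplex.mappingCone φ) := by
  let e (i : ℤ) : (K.X (i + 1) × L.X i) ≃ₗ[R] (CochainComplex.mappingCone φ).X i :=
    (HomologicalComplex.homotopyCofiber.XIsoBiprod φ i (i + 1) rfl ≪≫
      ModuleCat.biprodIsoProd _ _).symm.toLinearEquiv
  have := hK.finite
  have := hL.finite
  have := hK.projective
  have := hL.projective
  obtain ⟨a, b, hab⟩ := hK.bounded
  obtain ⟨a', b', hab'⟩ := hL.bounded
  refine ⟨fun i ↦ .equiv (e i), fun i ↦ .of_equiv (e i), min (a - 1) a', max b b', fun i hi ↦ ?_⟩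
  have := hab (i + 1) (by lia)
  have := hab' i (by lia)
  exact (e i).symm.injective.subsingleton

lemma single (F : ModuleCat.{u} R) [Module.Finite R F] [Module.Projective R F] :
    IsStrictlyPerfect ((HomologicalComplex.single _ (.up ℤ) 0).obj F) := by
  have hzero (i : ℤ) (hi : i ≠ 0) :
      Subsingleton (((HomologicalComplex.single _ (.up ℤ) 0).obj F).X i) :=
    ModuleCat.subsingleton_of_isZero (HomologicalComplex.isZero_single_obj_X _ _ _ _ hi)
  let e : F ≃ₗ[R] ((HomologicalComplex.single _ (.up ℤ) 0).obj F).X 0 :=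
    (HomologicalComplex.singleObjXSelf (.up ℤ) 0 F).symm.toLinearEquiv
  refine ⟨fun i ↦ ?_, fun i ↦ ?_, 0, 0, fun i hi ↦ hzero i (by lia)⟩
  all_goals
    obtain rfl | hi := eq_or_ne i 0
    · first | exact .equiv e | exact .of_equiv e
    · have := hzero i hi
      infer_instance

lemma exists_forall_hom_single_shift_eq_zero (hK : IsStrictlyPerfect K) :
    ∃ n₀ : ℤ, ∀ n ≥ n₀, ∀ (N : ModuleCat.{u} R)
      (φ : K ⟶ ((CochainComplex.singleFunctor _ 0).obj N)⟦n⟧), φ = 0 := by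
  obtain ⟨a, b, hab⟩ := hK.bounded
  refine ⟨1 - a, fun n hn N φ ↦ ?_⟩
  ext1 i
  by_cases hi : i < a
  · have := hab i (.inl hi)
    exact (ModuleCat.isZero_of_subsingleton (K.X i)).eq_of_src _ _
  · exact (HomologicalComplex.isZero_single_obj_X (.up ℤ) 0 N (i + n) (by lia)).eq_of_tgt _ _

end IsStrictlyPerfect

namespace IsPerfect

lemma single (F : ModuleCat.{u} R) [Module.Finite R F] [Module.Projective R F] :
    IsPerfect ((DerivedCategory.singleFunctor _ 0).obj F) :=
  isPerfect_iff.2 ⟨_, .single F, ⟨Iso.refl _⟩⟩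

lemma obj₃_of_distTriang {T : Triangle (DerivedCategory (ModuleCat.{u} R))} (hT : T ∈ distTriang _)
    (h₁ : IsPerfect T.obj₁) (h₂ : IsPerfect T.obj₂) : IsPerfect T.obj₃ := by
  obtain ⟨K, hK, ⟨e₁⟩⟩ := isPerfect_iff.1 h₁
  obtain ⟨L, hL, ⟨e₂⟩⟩ := isPerfect_iff.1 h₂
  have := hK.isKProjective
  obtain ⟨φ, hφ⟩ := derivedCategoryQ_map_surjective K L (e₁.hom ≫ T.mor₁ ≫ e₂.inv)
  have comm : DerivedCategory.Q.map φ ≫ e₂.hom = e₁.hom ≫ T.mor₁ := by simp [hφ]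
  let e := isoTriangleOfIso₁₂ _ T (DerivedCategory.mappingCone_triangle_distinguished φ) hT e₁ e₂
    comm
  exact isPerfect_iff.2 ⟨_, hK.mappingCone hL φ, ⟨Triangle.π₃.mapIso e⟩⟩

lemma exists_forall_hom_single_shift_eq_zero {X : DerivedCategory (ModuleCat.{u} R)}
    (hX : IsPerfect X) :
    ∃ n₀ : ℤ, ∀ n ≥ n₀, ∀ (N : ModuleCat.{u} R)
      (f : X ⟶ ((DerivedCategory.singleFunctor _ 0).obj N)⟦n⟧), f = 0 := by
  obtain ⟨K, hK, ⟨e⟩⟩ := isPerfect_iff.1 hX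
  have := hK.isKProjective
  obtain ⟨n₀, hn₀⟩ := hK.exists_forall_hom_single_shift_eq_zero
  refine ⟨n₀, fun n hn N f ↦ ?_⟩
  let eN : DerivedCategory.Q.obj (((CochainComplex.singleFunctor _ 0).obj N)⟦n⟧) ≅
      ((DerivedCategory.singleFunctor _ 0).obj N)⟦n⟧ :=
    (DerivedCategory.Q.commShiftIso n).app ((CochainComplex.singleFunctor _ 0).obj N)
  obtain ⟨φ, hφ⟩ := derivedCategoryQ_map_surjective K _ (e.hom ≫ f ≫ eN.inv)
  rw [hn₀ n hn N φ, Functor.map_zero] at hφ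
  rw [← cancel_epi e.hom, ← cancel_mono eN.inv, Category.assoc, ← hφ]
  simp

end IsPerfect

end Perfect

section Syzygy

variable {R : Type u} [CommRing R]

lemma exists_shortExact_finite_projective [IsNoetherianRing R] (M : ModuleCat.{u} R)
    [Module.Finite R M] :
    ∃ (N F : ModuleCat.{u} R) (i : N ⟶ F) (p : F ⟶ M) (w : i ≫ p = 0),
      Module.Finite R N ∧ Module.Finite R F ∧ Module.Projective R F ∧
        (ShortComplex.mk i p w).ShortExact := by
  obtain ⟨k, p, hp⟩ := Module.Finite.exists_fin' R M
  exact ⟨.of R (LinearMap.ker p), .of R (Fin k → R), _, ModuleCat.ofHom p, _,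
    inferInstanceAs (Module.Finite R (LinearMap.ker p)),
    inferInstanceAs (Module.Finite R (Fin k → R)),
    inferInstanceAs (Module.Projective R (Fin k → R)), p.shortExact_shortComplexKer hp⟩

lemma exists_distTriang_isPerfect_single_shift [IsNoetherianRing R] (n : ℕ) :
    ∀ (M : ModuleCat.{u} R) [Module.Finite R M],
    ∃ (N : ModuleCat.{u} R) (X Z : DerivedCategory (ModuleCat.{u} R))
      (f : X ⟶ (DerivedCategory.singleFunctor _ 0).obj M)
      (g : (DerivedCategory.singleFunctor _ 0).obj M ⟶ Z) (h : Z ⟶ X⟦(1 : ℤ)⟧),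
      Module.Finite R N ∧ IsPerfect X ∧
      Nonempty (Z ≅ ((DerivedCategory.singleFunctor _ 0).obj N)⟦((n + 1 : ℕ) : ℤ)⟧) ∧
      Triangle.mk f g h ∈ distTriang _ := by
  induction n with
  | zero =>
    intro M _
    obtain ⟨N, F, i, p, w, hN, _, _, hS⟩ := exists_shortExact_finite_projective M
    exact ⟨N, _, _, _, _, _, hN, .single F, ⟨Iso.refl _⟩,
      rot_of_distTriang _ hS.singleTriangle_distinguished⟩
  | succ n ih =>
    intro M _
    obtain ⟨L, F, i, p, w, _, _, _, hS⟩ := exists_shortExact_finite_projective M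
    obtain ⟨N, X, Z, f, g, h, hN, hX, ⟨e⟩, hT⟩ := ih L
    obtain ⟨Y, v, t, hY⟩ :=
      distinguished_cocone_triangle (f ≫ (DerivedCategory.singleFunctor _ 0).map i)
    let octahedron := Triangulated.someOctahedron rfl hT hS.singleTriangle_distinguished hY
    let e' := (shiftFunctor _ (1 : ℤ)).mapIso e ≪≫
      (shiftFunctorAdd' (DerivedCategory (ModuleCat.{u} R)) ((n + 1 : ℕ) : ℤ) 1
        ((n + 2 : ℕ) : ℤ) (by lia)).symm.app _
    exact ⟨N, Y, _, _, _, _, hN, .obj₃_of_distTriang hY hX (.single F), ⟨e'⟩,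
      rot_of_distTriang _ octahedron.mem⟩

end Syzygy

section SingularityCategory

variable {R : Type u} [CommRing R]

/-- `f` factors through a perfect complex. Between bounded complexes with finitely generated
cohomology this expresses that `f` becomes zero in the Verdier quotient `D_sg(R)`. -/
def FactorsThroughPerfect {X Y : DerivedCategory (ModuleCat.{u} R)} (f : X ⟶ Y) : Prop :=
  ∃ P, IsPerfect P ∧ ∃ (g : X ⟶ P) (h : P ⟶ Y), g ≫ h = f

lemma FactorsThroughPerfect.mem_ca {M : ModuleCat.{u} R} {r : R}
    (h : FactorsThroughPerfect ((DerivedCategory.singleFunctor _ 0).map (r • 𝟙 M))) :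
    r ∈ ca R M := by
  obtain ⟨P, hP, f, g, hfg⟩ := h
  obtain ⟨n₀, hn₀⟩ := hP.exists_forall_hom_single_shift_eq_zero
  refine mem_ca_iff.2 ⟨n₀.toNat, fun i hi N _ ↦ Module.mem_annihilator.2 fun x ↦ ?_⟩
  have hgx : g ≫ x.hom = 0 := hn₀ _ (by lia) N _
  ext
  rw [hom_smul_eq_map_smul_id_comp, ← hfg, Category.assoc, hgx, comp_zero, Ext.zero_hom]

lemma factorsThroughPerfect_of_mem_ca [IsNoetherianRing R] {M : ModuleCat.{u} R}
    [Module.Finite R M] {r : R} (hr : r ∈ ca R M) :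
    FactorsThroughPerfect ((DerivedCategory.singleFunctor _ 0).map (r • 𝟙 M)) := by
  obtain ⟨n, hn⟩ := mem_ca_iff.1 hr
  obtain ⟨N, X, Z, f, g, h, hN, hX, ⟨e⟩, hT⟩ := exists_distTriang_isPerfect_single_shift n M
  obtain ⟨x, hx : x.hom = g ≫ e.hom⟩ := Ext.homEquiv.surjective (g ≫ e.hom)
  have hrx : r • x = 0 := Module.mem_annihilator.1 (hn n le_rfl N hN) x
  have hrg : (DerivedCategory.singleFunctor _ 0).map (r • 𝟙 M) ≫ g = 0 := by
    rw [← cancel_mono e.hom, Category.assoc, zero_comp, ← hx,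
      ← hom_smul_eq_map_smul_id_comp r x, hrx, Ext.zero_hom]
  obtain ⟨k, hk⟩ := Triangle.coyoneda_exact₂ _ hT _ hrg
  exact ⟨X, hX, k, f, hk.symm⟩

end SingularityCategory

/-- `ca_R(M)` equals the annihilator of `M` in the singularity
category: `r · id_M` vanishes in `D_sg(R)`, i.e. `r · id_M` factors through a
perfect complex in the bounded derived category. -/
theorem stmt7 (R : Type u) [CommRing R] [IsNoetherianRing R]
    (M : ModuleCat.{u} R) [Module.Finite R M] :
    ca R M = {r : R | ∃ P : DerivedCategory (ModuleCat.{u} R), IsPerfect P ∧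
      ∃ (f : (DerivedCategory.singleFunctor (ModuleCat.{u} R) 0).obj M ⟶ P)
        (g : P ⟶ (DerivedCategory.singleFunctor (ModuleCat.{u} R) 0).obj M),
        f ≫ g = (DerivedCategory.singleFunctor (ModuleCat.{u} R) 0).map (r • 𝟙 M)} := by
  ext r
  exact ⟨factorsThroughPerfect_of_mem_ca, FactorsThroughPerfect.mem_ca⟩

end
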